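/- Differentiation under the integral sign for the E-potential: Let T > 0, let φ : (0,T] → ℝ be such that t ↦ t^{1−α_m} φ(t) extends to a continuous function on [0,T], and let s : [0,T] → ℝ satisfy |s(t) − s(τ)| ≤ |t − τ|^β for all t, τ ∈ [0,T], for some β > α_m/2. Then for all t ∈ (0,T] and all x ∈ ℝ with x ≠ s(t), the function x ↦ ∫₀^t φ(τ) E(x − s(τ), t − τ) dτ is differentiable at x and (∂/∂x) ∫₀^t φ(τ) E(x − s(τ), t − τ) dτ = ∫₀^t φ(τ) E_x(x − s(τ), t − τ) dτ. -/

import Mathlib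

open MeasureTheory Real Filter Set Topology intervalIntegral

/-- The Wright function `W(z; -β, δ) = ∑ z^k/(k! Γ(δ - βk))`, with `1/Γ` the
entire reciprocal Gamma function (here `Real.Gamma` vanishes at nonpositive
integers, so division gives the correct value `0`). -/
noncomputable def wrightW (β δ z : ℝ) : ℝ :=
  ∑' k : ℕ, z ^ k / (k.factorial * Real.Gamma (δ - β * k))

/-- Laplace convolution on `(0, ∞)`. -/
noncomputable def laplaceConv (f g : ℝ → ℝ) : ℝ → ℝ :=
  fun t => ∫ τ in (0:ℝ)..t, f τ * g (t - τ)

/-- Iterated Laplace convolution `h₀ ∗ h₁ ∗ ⋯ ∗ hₙ`. -/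
noncomputable def iterConv : (n : ℕ) → (Fin (n + 1) → ℝ → ℝ) → ℝ → ℝ
  | 0, h => h 0
  | n + 1, h => laplaceConv (iterConv n (fun i => h i.castSucc)) (h (Fin.last (n + 1)))

/-- `S^μ_m(t; -ℓ₁, …, -ℓ_m; -α₁, …, -α_m)` with the decomposition `μ₁ = μ`,
`μ_j = 0` for `j ≥ 2`: the Laplace convolution of
`h_j(t) = t^{μ_j - 1} W(-ℓ_j t^{-α_j}; -α_j, μ_j)`.  Indices run over
`Fin (n+1)`, i.e. the number of terms is `m = n + 1 ≥ 1`. -/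
noncomputable def Sconv (n : ℕ) (μ : ℝ) (α ℓ : Fin (n + 1) → ℝ) : ℝ → ℝ :=
  iterConv n (fun j t =>
    t ^ ((if j = 0 then μ else 0) - 1) *
      wrightW (α j) (if j = 0 then μ else 0) (-(ℓ j) * t ^ (-(α j))))

/-- `Γ^μ₁(x,t)`. -/
noncomputable def Gam1 (n : ℕ) (α lam : Fin (n + 1) → ℝ) (μ x t : ℝ) : ℝ :=
  (4 * Real.pi) ^ (-(1/2 : ℝ)) *
    ∫ p in Set.Ioi (0:ℝ),
      p ^ (-(1/2 : ℝ)) * Real.exp (-(|x| ^ 2) / (4 * p)) *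
        Sconv n μ α (fun j => lam j * p) t

/-- The kernel `E(x,t) = Γ⁰₁(x,t)`. -/
noncomputable def kerE (n : ℕ) (α lam : Fin (n + 1) → ℝ) (x t : ℝ) : ℝ :=
  Gam1 n α lam 0 x t

/-- `E_x`, the spatial derivative of `E`. -/
noncomputable def kerEx (n : ℕ) (α lam : Fin (n + 1) → ℝ) (x t : ℝ) : ℝ :=
  deriv (fun y => kerE n α lam y t) x

/-- `E_xx`, the second spatial derivative of `E`. -/
noncomputable def kerExx (n : ℕ) (α lam : Fin (n + 1) → ℝ) (x t : ℝ) : ℝ :=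
  deriv (fun y => kerEx n α lam y t) x

/-- The kernel `Z(x,t) = ∑ₖ λₖ Γ^{1-αₖ}₁(x,t)`. -/
noncomputable def kerZ (n : ℕ) (α lam : Fin (n + 1) → ℝ) (x t : ℝ) : ℝ :=
  ∑ k : Fin (n + 1), lam k * Gam1 n α lam (1 - α k) x t

/-- `Z_x`, the spatial derivative of `Z`. -/
noncomputable def kerZx (n : ℕ) (α lam : Fin (n + 1) → ℝ) (x t : ℝ) : ℝ :=
  deriv (fun y => kerZ n α lam y t) x

/-- `Z_xx`, the second spatial derivative of `Z`. -/
noncomputable def kerZxx (n : ℕ) (α lam : Fin (n + 1) → ℝ) (x t : ℝ) : ℝ :=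
  deriv (fun y => kerZx n α lam y t) x

/-!
The kernel `E(·, t)` is a superposition of heat kernels over times `p > 0`, with the density
`p ↦ S⁰_m(t; -λp; -α)` in `p`. Rotating the Gamma integrals in the Wright series gives
`|W(-z; -α, 0)| ≤ C min(z, 1/z)`; hence each factor `t⁻¹ W(-λ p t^(-α); -α, 0)` has an `L¹(0, T]`
norm of order `min(1, 1/p)` and is of order `min(p, 1/p)` away from `t = 0`. Laplace convolution
preserves both estimates, because in `(f ∗ g)(t)` one of the two arguments is at least `t/2`.

With `w(t) = 2 ∫ p^(-1/2) |S⁰_m(t; -λp; -α)| dp`, integrable in `t` by Tonelli, the heat kernel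
bounds yield `|E| ≤ w(t)` and `|x| |E_x| ≤ w(t)` up to a constant, while `E_x` is bounded away from
`t = 0`. Since `x ≠ s(t)`, the curve `s(τ)` stays away from `x` for `τ` near `t`, where `φ` is
bounded, so `φ(τ) E_x(y - s(τ), t - τ)` is dominated uniformly in `y` near `x` by the integrable
function `D |φ(τ)| + B |φ(τ)| w(t - τ)`.
-/

/-! ### Laplace integrals along rotated rays -/

theorem integrableOn_rpow_mul_exp_neg_mul {s b : ℝ} (hs : -1 < s) (hb : 0 < b) :
    IntegrableOn (fun u : ℝ => u ^ s * rexp (-(b * u))) (Ioi 0) := by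
  simpa using integrableOn_rpow_mul_exp_neg_mul_rpow (p := 1) hs one_pos hb

theorem norm_ofReal_mul_cexp_neg_mul {r : ℝ} (hr : 0 ≤ r) (c : ℂ) (u : ℝ) :
    ‖(r : ℂ) * Complex.exp (-(c * u))‖ = r * rexp (-(c.re * u)) := by
  rw [norm_mul, Complex.norm_exp, Complex.norm_real, norm_of_nonneg hr, Complex.neg_re,
    Complex.re_mul_ofReal]

theorem integrableOn_rpow_mul_cexp_neg_mul {s : ℝ} (hs : -1 < s) {c : ℂ} (hc : 0 < c.re) :
    IntegrableOn (fun u : ℝ => ((u ^ s : ℝ) : ℂ) * Complex.exp (-(c * u))) (Ioi 0) := by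
  refine (integrableOn_rpow_mul_exp_neg_mul hs hc).mono' (by fun_prop) ?_
  filter_upwards [ae_restrict_mem measurableSet_Ioi] with u hu
  rw [norm_ofReal_mul_cexp_neg_mul (rpow_nonneg (le_of_lt hu) _)]

theorem differentiableOn_integral_rpow_mul_cexp_neg_mul {s : ℝ} (hs : -1 < s) :
    DifferentiableOn ℂ
      (fun c : ℂ => ∫ u in Ioi (0 : ℝ), ((u ^ s : ℝ) : ℂ) * Complex.exp (-(c * u)))
      {c : ℂ | 0 < c.re} := by
  intro c hc
  have hc : 0 < c.re := hc
  refine (_root_.hasDerivAt_integral_of_dominated_loc_of_deriv_le (𝕜 := ℂ)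
    (F := fun w u => ((u ^ s : ℝ) : ℂ) * Complex.exp (-(w * u)))
    (μ := volume.restrict (Ioi (0 : ℝ)))
    (s := {w : ℂ | c.re / 2 < w.re})
    (F' := fun w u => ((u ^ s : ℝ) : ℂ) * (Complex.exp (-(w * u)) * (-u)))
    (bound := fun u => u ^ (s + 1) * rexp (-(c.re / 2 * u)))
    ((isOpen_lt continuous_const Complex.continuous_re).mem_nhds (half_lt_self hc))
    (Eventually.of_forall fun w => by fun_prop) (integrableOn_rpow_mul_cexp_neg_mul hs hc)
    (by fun_prop) ?_ (integrableOn_rpow_mul_exp_neg_mul (by linarith) (half_pos hc))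
    ?_).2.differentiableAt.differentiableWithinAt
  · filter_upwards [ae_restrict_mem measurableSet_Ioi] with u hu w hw
    have hu : 0 < u := hu
    rw [← mul_assoc, norm_mul, norm_ofReal_mul_cexp_neg_mul (rpow_nonneg hu.le _), norm_neg,
      Complex.norm_real, norm_of_nonneg hu.le, mul_right_comm, ← rpow_add_one hu.ne']
    gcongr
  · refine Eventually.of_forall fun u w _ => HasDerivAt.const_mul _ ?_
    simpa using ((hasDerivAt_id w).mul_const (u : ℂ)).neg.cexp

theorem integral_rpow_mul_cexp_neg_ofReal_mul {s r : ℝ} (hs : 0 < s) (hr : 0 < r) :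
    ∫ u in Ioi (0 : ℝ), ((u ^ (s - 1) : ℝ) : ℂ) * Complex.exp (-((r : ℂ) * u)) =
      Gamma s * (r : ℂ) ^ (-(s : ℂ)) := by
  calc ∫ u in Ioi (0 : ℝ), ((u ^ (s - 1) : ℝ) : ℂ) * Complex.exp (-((r : ℂ) * u))
      = ((∫ u in Ioi (0 : ℝ), u ^ (s - 1) * rexp (-(r * u)) : ℝ) : ℂ) := by
        rw [← integral_complex_ofReal]
        push_cast
        rfl
    _ = Gamma s * (r : ℂ) ^ (-(s : ℂ)) := by
        rw [integral_rpow_mul_exp_neg_mul_Ioi hs hr, ← Complex.ofReal_neg,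
          ← Complex.ofReal_cpow hr.le, ← Complex.ofReal_mul, one_div, inv_rpow hr.le,
          rpow_neg hr.le, mul_comm]

-- Both sides are holomorphic on the right half-plane and agree on the positive real axis.
theorem integral_rpow_mul_cexp_neg_mul {s : ℝ} (hs : 0 < s) {c : ℂ} (hc : 0 < c.re) :
    ∫ u in Ioi (0 : ℝ), ((u ^ (s - 1) : ℝ) : ℂ) * Complex.exp (-(c * u)) =
      Gamma s * c ^ (-(s : ℂ)) := by
  have hopen : IsOpen {z : ℂ | 0 < z.re} := isOpen_lt continuous_const Complex.continuous_re
  have hlaplace := (differentiableOn_integral_rpow_mul_cexp_neg_mul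
    (show -1 < s - 1 by linarith)).analyticOnNhd hopen
  have hpower : DifferentiableOn ℂ (fun c : ℂ => (Gamma s : ℂ) * c ^ (-(s : ℂ)))
      {z : ℂ | 0 < z.re} := fun z hz =>
    ((differentiableAt_id.cpow (differentiableAt_const _) (Or.inl hz)).const_mul
      _).differentiableWithinAt
  have hto : Tendsto (fun r : ℝ => (r : ℂ)) (𝓝[>] 1) (𝓝[≠] 1) := by
    refine tendsto_nhdsWithin_iff.2
      ⟨(Complex.continuous_ofReal.tendsto' 1 1 (by simp)).mono_left nhdsWithin_le_nhds, ?_⟩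
    filter_upwards [self_mem_nhdsWithin] with r hr
    simpa using ne_of_gt hr
  refine hlaplace.eqOn_of_preconnected_of_frequently_eq (hpower.analyticOnNhd hopen)
    (convex_halfSpace_re_gt 0).isPreconnected (z₀ := 1) (by simp)
    (hto.frequently (Eventually.frequently ?_)) hc
  filter_upwards [self_mem_nhdsWithin] with r hr
  exact integral_rpow_mul_cexp_neg_ofReal_mul hs (one_pos.trans hr)

theorem integrableOn_exp_neg_mul_mul_exp_mul_rpow {a b : ℝ} (ha : a ∈ Ioo (0 : ℝ) 1) (hb : 0 < b)
    (z : ℝ) : IntegrableOn (fun u : ℝ => rexp (-(b * u)) * rexp (z * u ^ a)) (Ioi 0) := by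
  refine integrable_of_isBigO_exp_neg (b := b / 2) (half_pos hb) ?_ ?_
  · have : Continuous fun u : ℝ => u ^ a := continuous_id.rpow_const fun _ => Or.inr ha.1.le
    fun_prop
  have hsmall : Tendsto (fun u : ℝ => z * u ^ (-(1 - a))) atTop (𝓝 0) := by
    simpa using (tendsto_rpow_neg_atTop (sub_pos.2 ha.2)).const_mul z
  refine Asymptotics.IsBigO.of_bound 1 ?_
  filter_upwards [hsmall.eventually_lt_const (half_pos hb), eventually_gt_atTop 0] with u hu hu0
  rw [← exp_add, one_mul, norm_of_nonneg (exp_pos _).le, norm_of_nonneg (exp_pos _).le, exp_le_exp]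
  calc -(b * u) + z * u ^ a = -(b * u) + z * u ^ (-(1 - a)) * u := by
        rw [mul_assoc, ← rpow_add_one hu0.ne', neg_sub, sub_add_cancel]
    _ ≤ -(b * u) + b / 2 * u := by gcongr
    _ = -(b / 2) * u := by ring

theorem hasSum_integral_cexp_neg_mul_mul_cexp_mul_rpow {a : ℝ} (ha : a ∈ Ioo (0 : ℝ) 1) {c : ℂ}
    (hc : 0 < c.re) (w : ℂ) :
    HasSum (fun k : ℕ => w ^ k / k.factorial *
        (Gamma (a * k + 1) * c ^ (-((a * k + 1 : ℝ) : ℂ))))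
      (∫ u in Ioi (0 : ℝ), Complex.exp (-(c * u)) * Complex.exp (w * (u ^ a : ℝ))) := by
  have hsum := hasSum_integral_of_dominated_convergence (μ := volume.restrict (Ioi (0 : ℝ)))
    (F := fun (k : ℕ) u => Complex.exp (-(c * u)) * ((w * (u ^ a : ℝ)) ^ k / k.factorial))
    (f := fun u => Complex.exp (-(c * u)) * Complex.exp (w * (u ^ a : ℝ)))
    (fun k u => rexp (-(c.re * u)) * ((‖w‖ * u ^ a) ^ k / k.factorial)) (fun k => by fun_prop) ?_
    (Eventually.of_forall fun u => (summable_pow_div_factorial _).mul_left _) ?_ ?_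
  · refine hsum.congr_fun fun k => ?_
    rw [← integral_rpow_mul_cexp_neg_mul (by have := ha.1; positivity) hc,
      ← MeasureTheory.integral_const_mul]
    refine setIntegral_congr_fun measurableSet_Ioi fun u hu => ?_
    simp only [add_sub_cancel_right]
    rw [rpow_mul (le_of_lt hu), rpow_natCast]
    push_cast
    ring
  · intro k
    filter_upwards [ae_restrict_mem measurableSet_Ioi] with u hu
    have hu : 0 < u := hu
    rw [norm_mul, Complex.norm_exp, norm_div, norm_pow, norm_mul, Complex.norm_real,
      Complex.norm_natCast, norm_of_nonneg (rpow_nonneg hu.le _), Complex.neg_re,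
      Complex.re_mul_ofReal]
  · refine (integrableOn_exp_neg_mul_mul_exp_mul_rpow ha hc ‖w‖).congr
      (Eventually.of_forall fun u => ?_)
    simp only [tsum_mul_left]
    rw [exp_eq_exp_ℝ, NormedSpace.exp_eq_tsum_div]
  · refine Eventually.of_forall fun u => HasSum.mul_left _ ?_
    rw [Complex.exp_eq_exp_ℂ]
    exact NormedSpace.expSeries_div_hasSum_exp _

/-! ### The Wright function -/

/-- Angle of the rays along which the Gamma integral is taken in the integral representation of
`wrightW α 0`: on them both the Laplace factor and `exp (-z u ^ α)` decay for `z > 0`. -/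
noncomputable def contourAngle (α : ℝ) : ℝ := π * α / (1 + α)

theorem contourAngle_mem_Ioo {α : ℝ} (hα : α ∈ Ioo (0 : ℝ) 1) :
    contourAngle α ∈ Ioo 0 (π / 2) := by
  have h : 0 < 1 + α := by linarith [hα.1]
  refine ⟨div_pos (mul_pos pi_pos hα.1) h, ?_⟩
  rw [contourAngle, div_lt_div_iff₀ h two_pos]
  nlinarith [pi_pos, hα.2]

theorem contourAngle_eq_mul_pi_sub {α : ℝ} (hα : 0 < α) :
    contourAngle α = α * (π - contourAngle α) := by
  rw [contourAngle]
  field_simp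
  ring

theorem cos_contourAngle_pos {α : ℝ} (hα : α ∈ Ioo (0 : ℝ) 1) : 0 < cos (contourAngle α) :=
  cos_pos_of_mem_Ioo
    ⟨by linarith [(contourAngle_mem_Ioo hα).1, pi_pos], (contourAngle_mem_Ioo hα).2⟩

theorem re_cexp_neg_ofReal_mul_I (θ : ℝ) : (Complex.exp (-(θ * Complex.I))).re = cos θ := by
  rw [← neg_mul, ← Complex.ofReal_neg, Complex.exp_ofReal_mul_I_re, cos_neg]

theorem cexp_contourAngle_mul_pow_mul_cpow {α : ℝ} (hα : α ∈ Ioo (0 : ℝ) 1) (k : ℕ) :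
    Complex.exp (-(contourAngle α * Complex.I)) *
        (Complex.exp (contourAngle α * Complex.I) ^ k *
          Complex.exp (-(contourAngle α * Complex.I)) ^ (-((α * k + 1 : ℝ) : ℂ))) =
      Complex.exp ((π * (α * k) : ℝ) * Complex.I) := by
  obtain ⟨hpos, hlt⟩ := contourAngle_mem_Ioo hα
  have hlog : Complex.log (Complex.exp (-(contourAngle α * Complex.I))) =
      -(contourAngle α * Complex.I) := by
    have him : (-(contourAngle α * Complex.I)).im = -contourAngle α := by simp
    exact Complex.log_exp (by rw [him]; linarith) (by rw [him]; linarith)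
  rw [Complex.cpow_def_of_ne_zero (Complex.exp_ne_zero _), hlog, ← Complex.exp_nat_mul,
    ← Complex.exp_add, ← Complex.exp_add]
  congr 1
  have hangle : (contourAngle α : ℂ) = α * (π - contourAngle α) := by
    exact_mod_cast contourAngle_eq_mul_pi_sub hα.1
  push_cast
  linear_combination (k * Complex.I) * hangle

theorem inv_Gamma_neg {x : ℝ} (hx : 0 ≤ x) :
    (Gamma (-x))⁻¹ = -(1 / π) * (Gamma (x + 1) * sin (π * x)) := by
  have hGamma : Gamma (x + 1) ≠ 0 := (Gamma_pos_of_pos (by linarith)).ne'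
  have hreflection := congrArg Inv.inv (Gamma_mul_Gamma_one_sub (-x))
  rw [sub_neg_eq_add, add_comm, mul_neg, sin_neg, mul_inv, inv_div] at hreflection
  field_simp at hreflection ⊢
  linear_combination hreflection

-- By the reflection formula the coefficient of `z ^ k / k!` is, up to `-1/π`, the imaginary part of
-- `exp (i π α k) Γ(α k + 1)`, and the Gamma factor is a Laplace integral along a rotated ray.
theorem hasSum_wrightW_zero {α : ℝ} (hα : α ∈ Ioo (0 : ℝ) 1) (z : ℝ) :
    HasSum (fun k : ℕ => z ^ k / (k.factorial * Gamma (0 - α * k)))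
      (-(1 / π) * (Complex.exp (-(contourAngle α * Complex.I)) * ∫ u in Ioi (0 : ℝ),
        Complex.exp (-(Complex.exp (-(contourAngle α * Complex.I)) * u)) *
          Complex.exp (z * Complex.exp (contourAngle α * Complex.I) * (u ^ α : ℝ))).im) := by
  have hre : 0 < (Complex.exp (-(contourAngle α * Complex.I))).re := by
    rw [re_cexp_neg_ofReal_mul_I]
    exact cos_contourAngle_pos hα
  have hsum := (hasSum_integral_cexp_neg_mul_mul_cexp_mul_rpow hα hre
    (z * Complex.exp (contourAngle α * Complex.I))).mul_left
      (Complex.exp (-(contourAngle α * Complex.I)))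
  refine ((Complex.hasSum_im hsum).mul_left (-(1 / π))).congr_fun fun k => ?_
  have hterm : Complex.exp (-(contourAngle α * Complex.I)) *
      ((z * Complex.exp (contourAngle α * Complex.I)) ^ k / k.factorial * (Gamma (α * k + 1) *
        Complex.exp (-(contourAngle α * Complex.I)) ^ (-((α * k + 1 : ℝ) : ℂ)))) =
      ((z ^ k / k.factorial * Gamma (α * k + 1) : ℝ) : ℂ) *
        Complex.exp ((π * (α * k) : ℝ) * Complex.I) := by
    rw [← cexp_contourAngle_mul_pow_mul_cpow hα]
    push_cast
    ring
  have hk : 0 ≤ α * k := mul_nonneg hα.1.le k.cast_nonneg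
  rw [hterm, Complex.im_ofReal_mul, Complex.exp_ofReal_mul_I_im, zero_sub, ← div_div,
    div_eq_mul_inv _ (Gamma _), inv_Gamma_neg hk]
  ring

theorem exp_neg_le_inv {v : ℝ} (hv : 0 < v) : rexp (-v) ≤ v⁻¹ := by
  rw [exp_neg]
  gcongr
  linarith [add_one_le_exp v]

theorem exists_abs_wrightW_neg_le_inv {α : ℝ} (hα : α ∈ Ioo (0 : ℝ) 1) :
    ∃ C, ∀ z, 0 < z → |wrightW α 0 (-z)| ≤ C * z⁻¹ := by
  set κ := cos (contourAngle α) with hκdef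
  have hκ : 0 < κ := cos_contourAngle_pos hα
  refine ⟨1 / π * ∫ u in Ioi (0 : ℝ), κ⁻¹ * (u ^ (-α) * rexp (-(κ * u))), fun z hz => ?_⟩
  have hint : IntegrableOn (fun u : ℝ => u ^ (-α) * rexp (-(κ * u))) (Ioi 0) :=
    integrableOn_rpow_mul_exp_neg_mul (by linarith [hα.2]) hκ
  rw [wrightW, (hasSum_wrightW_zero hα (-z)).tsum_eq, abs_mul, abs_neg,
    abs_of_pos (one_div_pos.2 pi_pos), mul_assoc]
  gcongr
  refine (Complex.abs_im_le_norm _).trans ?_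
  rw [norm_mul, ← neg_mul, ← Complex.ofReal_neg, Complex.norm_exp_ofReal_mul_I, one_mul,
    Complex.ofReal_neg, neg_mul, ← MeasureTheory.integral_mul_const]
  refine norm_integral_le_of_norm_le ((hint.const_mul _).mul_const _) ?_
  filter_upwards [ae_restrict_mem measurableSet_Ioi] with u hu
  have hu : 0 < u := hu
  have hre : (((-z : ℝ) : ℂ) * Complex.exp (contourAngle α * Complex.I) * (u ^ α : ℝ)).re =
      -(z * κ * u ^ α) := by
    rw [mul_right_comm, ← Complex.ofReal_mul, Complex.re_ofReal_mul, Complex.exp_ofReal_mul_I_re]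
    ring
  rw [norm_mul, Complex.norm_exp, Complex.norm_exp, hre, Complex.neg_re, Complex.re_mul_ofReal,
    re_cexp_neg_ofReal_mul_I, ← hκdef]
  calc rexp (-(κ * u)) * rexp (-(z * κ * u ^ α))
      ≤ rexp (-(κ * u)) * (z * κ * u ^ α)⁻¹ := by
        gcongr
        exact exp_neg_le_inv (by positivity)
    _ = κ⁻¹ * (u ^ (-α) * rexp (-(κ * u))) * z⁻¹ := by
        rw [rpow_neg hu.le]
        field_simp

-- The constant term of the Wright series vanishes because `1 / Γ(0) = 0`.
theorem exists_abs_wrightW_neg_le_self {α : ℝ} (hα : α ∈ Ioo (0 : ℝ) 1) :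
    ∃ C, ∀ z ∈ Ioc (0 : ℝ) 1, |wrightW α 0 (-z)| ≤ C * z := by
  have hsum := (hasSum_wrightW_zero hα 1).summable.abs
  refine ⟨∑' k : ℕ, |(1 : ℝ) ^ k / (k.factorial * Gamma (0 - α * k))|, fun z hz => ?_⟩
  rw [wrightW, ← norm_eq_abs]
  refine tsum_of_norm_bounded (hsum.hasSum.mul_right z) fun k => ?_
  rcases k.eq_zero_or_pos with rfl | hk
  · simp
  · rw [norm_eq_abs, abs_div, abs_div, abs_pow, abs_neg, abs_of_pos hz.1, one_pow, abs_one,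
      div_mul_eq_mul_div, one_mul]
    gcongr
    exact pow_le_of_le_one hz.1.le hz.2 hk.ne'

theorem exists_abs_wrightW_neg_le_min {α : ℝ} (hα : α ∈ Ioo (0 : ℝ) 1) :
    ∃ C, 0 ≤ C ∧ ∀ z, 0 < z → |wrightW α 0 (-z)| ≤ C * min z z⁻¹ := by
  obtain ⟨A, hA⟩ := exists_abs_wrightW_neg_le_inv hα
  obtain ⟨B, hB⟩ := exists_abs_wrightW_neg_le_self hα
  refine ⟨max 0 (max A B), le_max_left _ _, fun z hz => ?_⟩
  rcases le_total z 1 with h | h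
  · rw [min_eq_left (h.trans ((one_le_inv₀ hz).2 h))]
    exact (hB z ⟨hz, h⟩).trans (by gcongr; exact (le_max_right _ _).trans (le_max_right _ _))
  · rw [min_eq_right ((inv_le_one_of_one_le₀ h).trans h)]
    exact (hA z hz).trans (by gcongr; exact (le_max_left _ _).trans (le_max_right _ _))

theorem measurable_wrightW_zero {α : ℝ} (hα : α ∈ Ioo (0 : ℝ) 1) : Measurable (wrightW α 0) :=
  measurable_of_tendsto_metrizable (f := fun n z =>
      ∑ k ∈ Finset.range n, z ^ k / (k.factorial * Gamma (0 - α * k))) (fun n => by fun_prop)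
    (tendsto_pi_nhds.2 fun z => (hasSum_wrightW_zero hα z).summable.hasSum.tendsto_sum_nat)

/-! ### Laplace convolution -/

theorem laplaceConv_eq_mul_integral_zero_one (f g : ℝ → ℝ) (t : ℝ) :
    laplaceConv f g t = t * ∫ u in (0 : ℝ)..1, f (t * u) * g (t - t * u) := by
  have h := smul_integral_comp_mul_left (a := 0) (b := 1) (fun τ => f τ * g (t - τ)) t
  simpa [laplaceConv] using h.symm

theorem measurable_laplaceConv {X : Type*} [MeasurableSpace X] {f g : X → ℝ → ℝ}
    (hf : Measurable (Function.uncurry f)) (hg : Measurable (Function.uncurry g)) :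
    Measurable (Function.uncurry fun x => laplaceConv (f x) (g x)) := by
  have hintegrand : Measurable fun q : (X × ℝ) × ℝ =>
      f q.1.1 (q.1.2 * q.2) * g q.1.1 (q.1.2 - q.1.2 * q.2) :=
    (hf.comp (f := fun q : (X × ℝ) × ℝ => (q.1.1, q.1.2 * q.2)) (by fun_prop)).mul
      (hg.comp (f := fun q : (X × ℝ) × ℝ => (q.1.1, q.1.2 - q.1.2 * q.2)) (by fun_prop))
  have hintegral := (hintegrand.stronglyMeasurable.integral_prod_right'
    (ν := volume.restrict (Ioc (0 : ℝ) 1))).measurable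
  simp only [Function.uncurry_def, laplaceConv_eq_mul_integral_zero_one,
    integral_of_le zero_le_one]
  exact measurable_snd.mul hintegral

theorem integrableOn_Ioi_laplaceConv {f g : ℝ → ℝ} (hf : IntegrableOn f (Ioi 0))
    (hg : IntegrableOn g (Ioi 0)) : IntegrableOn (laplaceConv f g) (Ioi 0) :=
  (integrable_indicator_iff measurableSet_Ioi).1
    (integrable_posConvolution hf hg (ContinuousLinearMap.mul ℝ ℝ))

theorem integral_Ioi_laplaceConv {f g : ℝ → ℝ} (hf : IntegrableOn f (Ioi 0))
    (hg : IntegrableOn g (Ioi 0)) :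
    ∫ t in Ioi 0, laplaceConv f g t = (∫ t in Ioi 0, f t) * ∫ t in Ioi 0, g t :=
  integral_posConvolution hf hg (ContinuousLinearMap.mul ℝ ℝ)

theorem laplaceConv_indicator_Ioc {f g : ℝ → ℝ} {T t : ℝ} (ht : t ∈ Ioc 0 T) :
    laplaceConv ((Ioc 0 T).indicator f) ((Ioc 0 T).indicator g) t = laplaceConv f g t := by
  simp only [laplaceConv, integral_of_le ht.1.le, integral_Ioc_eq_integral_Ioo]
  refine setIntegral_congr_fun measurableSet_Ioo fun τ hτ => ?_
  have hleft : τ ∈ Ioc 0 T := ⟨hτ.1, hτ.2.le.trans ht.2⟩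
  have hright : t - τ ∈ Ioc 0 T := ⟨sub_pos.2 hτ.2, by linarith [hτ.1, ht.2]⟩
  simp only [indicator_of_mem hleft, indicator_of_mem hright]

theorem abs_laplaceConv_le {f g : ℝ → ℝ} {t : ℝ} (ht : 0 ≤ t) :
    |laplaceConv f g t| ≤ laplaceConv (fun τ => |f τ|) (fun τ => |g τ|) t := by
  simp only [laplaceConv, ← abs_mul]
  exact abs_integral_le_integral_abs ht

theorem integrableOn_Ioi_indicator_Ioc {f : ℝ → ℝ} {T : ℝ} (hf : IntegrableOn f (Ioc 0 T)) :
    IntegrableOn ((Ioc 0 T).indicator f) (Ioi 0) :=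
  ((integrable_indicator_iff measurableSet_Ioc).2 hf).integrableOn

theorem integrableOn_Ioc_laplaceConv {f g : ℝ → ℝ} {T : ℝ} (hf : IntegrableOn f (Ioc 0 T))
    (hg : IntegrableOn g (Ioc 0 T)) : IntegrableOn (laplaceConv f g) (Ioc 0 T) :=
  ((integrableOn_Ioi_laplaceConv (integrableOn_Ioi_indicator_Ioc hf)
    (integrableOn_Ioi_indicator_Ioc hg)).mono_set Ioc_subset_Ioi_self).congr_fun
      (fun _ ht => laplaceConv_indicator_Ioc ht) measurableSet_Ioc

theorem integral_Ioi_indicator_Ioc (f : ℝ → ℝ) (T : ℝ) :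
    ∫ t in Ioi 0, (Ioc 0 T).indicator f t = ∫ t in Ioc 0 T, f t := by
  rw [setIntegral_indicator measurableSet_Ioc, inter_eq_right.2 Ioc_subset_Ioi_self]

theorem integral_abs_laplaceConv_le {f g : ℝ → ℝ} {T : ℝ} (hf : IntegrableOn f (Ioc 0 T))
    (hg : IntegrableOn g (Ioc 0 T)) :
    ∫ t in Ioc 0 T, |laplaceConv f g t| ≤ (∫ t in Ioc 0 T, |f t|) * ∫ t in Ioc 0 T, |g t| := by
  have hF := integrableOn_Ioi_indicator_Ioc hf.abs
  have hG := integrableOn_Ioi_indicator_Ioc hg.abs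
  have hFG := integrableOn_Ioi_laplaceConv hF hG
  rw [← integral_Ioi_indicator_Ioc (fun t => |f t|), ← integral_Ioi_indicator_Ioc (fun t => |g t|),
    ← integral_Ioi_laplaceConv hF hG]
  refine (setIntegral_mono_on (integrableOn_Ioc_laplaceConv hf hg).abs
    (hFG.mono_set Ioc_subset_Ioi_self) measurableSet_Ioc fun t ht =>
      (abs_laplaceConv_le ht.1.le).trans_eq (laplaceConv_indicator_Ioc ht).symm).trans
    (setIntegral_mono_set hFG ?_ Ioc_subset_Ioi_self.eventuallyLE)
  filter_upwards [ae_restrict_mem measurableSet_Ioi] with t ht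
  exact intervalIntegral.integral_nonneg (le_of_lt ht) fun τ _ =>
    mul_nonneg (indicator_nonneg (fun _ _ => abs_nonneg _) _)
      (indicator_nonneg (fun _ _ => abs_nonneg _) _)

-- In `f ∗ g (t)` one of the two arguments always lies in `[t/2, t]`.
theorem abs_laplaceConv_le_of_abs_le {f g : ℝ → ℝ} {t A B : ℝ} (ht : 0 ≤ t)
    (hf : IntegrableOn f (Ioc 0 t)) (hg : IntegrableOn g (Ioc 0 t))
    (hfA : ∀ τ ∈ Icc (t / 2) t, |f τ| ≤ A) (hgB : ∀ τ ∈ Icc (t / 2) t, |g τ| ≤ B) :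
    |laplaceConv f g t| ≤ A * (∫ τ in Ioc 0 t, |g τ|) + B * ∫ τ in Ioc 0 t, |f τ| := by
  have ht2 : t ∈ Icc (t / 2) t := ⟨half_le_self ht, le_rfl⟩
  have hA : 0 ≤ A := (abs_nonneg _).trans (hfA t ht2)
  have hB : 0 ≤ B := (abs_nonneg _).trans (hgB t ht2)
  have hfi : IntervalIntegrable (fun τ => |f τ|) volume 0 t :=
    (intervalIntegrable_iff_integrableOn_Ioc_of_le ht).2 hf.abs
  have hgi : IntervalIntegrable (fun τ => |g (t - τ)|) volume 0 t := by
    have h : IntervalIntegrable (fun τ => |g τ|) volume 0 t :=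
      (intervalIntegrable_iff_integrableOn_Ioc_of_le ht).2 hg.abs
    simpa using (h.comp_sub_left t).symm
  have hpoint : ∀ τ ∈ Ioc 0 t, |f τ * g (t - τ)| ≤ A * |g (t - τ)| + B * |f τ| := by
    intro τ hτ
    rw [abs_mul]
    rcases le_total (t / 2) τ with h | h
    · exact (mul_le_mul_of_nonneg_right (hfA τ ⟨h, hτ.2⟩) (abs_nonneg _)).trans
        (le_add_of_nonneg_right (by positivity))
    · rw [mul_comm]
      exact (mul_le_mul_of_nonneg_right (hgB (t - τ) ⟨by linarith, by linarith [hτ.1]⟩)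
        (abs_nonneg _)).trans (le_add_of_nonneg_left (by positivity))
  calc |laplaceConv f g t|
      ≤ ∫ τ in (0 : ℝ)..t, (A * |g (t - τ)| + B * |f τ|) := by
        rw [laplaceConv, ← norm_eq_abs]
        exact norm_integral_le_of_norm_le ht (Eventually.of_forall hpoint)
          ((hgi.const_mul _).add (hfi.const_mul _))
    _ = A * (∫ τ in Ioc 0 t, |g τ|) + B * ∫ τ in Ioc 0 t, |f τ| := by
        rw [intervalIntegral.integral_add (hgi.const_mul _) (hfi.const_mul _),
          intervalIntegral.integral_const_mul, intervalIntegral.integral_const_mul,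
          integral_comp_sub_left (fun τ => |g τ|) t, sub_zero, sub_self,
          integral_of_le ht, integral_of_le ht]

/-! ### Wright densities -/

theorem integrableOn_rpow_mul_min_rpow_inv {b c : ℝ} (hb : b < 0) (hbc : -1 < b + c) :
    IntegrableOn (fun p : ℝ => p ^ b * min (p ^ c) p⁻¹) (Ioi 0) := by
  rw [← Ioc_union_Ioi_eq_Ioi zero_le_one]
  refine IntegrableOn.union ?_ ?_
  · have hpow : IntegrableOn (fun p : ℝ => p ^ (b + c)) (Ioc 0 1) :=
      (intervalIntegrable_iff_integrableOn_Ioc_of_le zero_le_one).1 (intervalIntegrable_rpow' hbc)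
    refine hpow.mono' (by fun_prop) ?_
    filter_upwards [ae_restrict_mem measurableSet_Ioc] with p hp
    have hp : 0 < p := hp.1
    rw [norm_of_nonneg (by positivity), rpow_add hp]
    gcongr
    exact min_le_left _ _
  · have hpow : IntegrableOn (fun p : ℝ => p ^ (b - 1)) (Ioi 1) :=
      integrableOn_Ioi_rpow_of_lt (by linarith) one_pos
    refine hpow.mono' (by fun_prop) ?_
    filter_upwards [ae_restrict_mem measurableSet_Ioi] with p hp
    have hp : 0 < p := one_pos.trans hp
    rw [norm_of_nonneg (by positivity), rpow_sub_one hp.ne', div_eq_mul_inv]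
    gcongr
    exact min_le_right _ _

theorem abs_mul_rpow_sub_one_mul_inv_rpow {a x : ℝ} (hx : 0 < x) :
    |a| * x ^ (a - 1) * (x ^ a)⁻¹ = |a| * x⁻¹ := by
  have := (rpow_pos_of_pos hx a).ne'
  rw [rpow_sub_one hx.ne']
  field_simp

theorem integral_inv_mul_comp_mul_rpow (F : ℝ → ℝ) {a q : ℝ} (ha : a ≠ 0) (hq : 0 < q) :
    ∫ t in Ioi (0 : ℝ), t⁻¹ * F (q * t ^ a) = |a|⁻¹ * ∫ z in Ioi (0 : ℝ), z⁻¹ * F z := by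
  have hscale : ∫ z in Ioi (0 : ℝ), z⁻¹ * F (q * z) = ∫ z in Ioi (0 : ℝ), z⁻¹ * F z := by
    have h := integral_comp_mul_left_Ioi (fun z => z⁻¹ * F z) 0 hq
    rw [mul_zero, smul_eq_mul] at h
    rw [← mul_inv_cancel_left₀ hq.ne' (∫ z in Ioi (0 : ℝ), z⁻¹ * F z), ← h,
      ← MeasureTheory.integral_const_mul]
    refine setIntegral_congr_fun measurableSet_Ioi fun z _ => ?_
    simp only [mul_inv]
    rw [← mul_assoc, mul_inv_cancel_left₀ hq.ne']
  have hpow := integral_comp_rpow_Ioi (fun z => z⁻¹ * F (q * z)) ha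
  rw [← hscale, ← hpow, ← MeasureTheory.integral_const_mul]
  refine setIntegral_congr_fun measurableSet_Ioi fun t ht => ?_
  simp only [smul_eq_mul]
  rw [← mul_assoc (|a| * _), abs_mul_rpow_sub_one_mul_inv_rpow ht, mul_assoc,
    inv_mul_cancel_left₀ (abs_ne_zero.2 ha)]

theorem integrableOn_inv_mul_comp_mul_rpow {F : ℝ → ℝ} {a q : ℝ} (ha : a ≠ 0) (hq : 0 < q)
    (hF : IntegrableOn (fun z => z⁻¹ * F z) (Ioi 0)) :
    IntegrableOn (fun t => t⁻¹ * F (q * t ^ a)) (Ioi 0) := by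
  have hscale : IntegrableOn (fun z => (q * z)⁻¹ * F (q * z)) (Ioi 0) :=
    (integrableOn_Ioi_comp_mul_left_iff (fun z => z⁻¹ * F z) 0 hq).2 (by rwa [mul_zero])
  have hpow := ((integrableOn_Ioi_comp_rpow_iff _ ha).2 hscale).const_mul (q * |a|⁻¹)
  refine IntegrableOn.congr_fun hpow (fun t ht => ?_) measurableSet_Ioi
  have habs := abs_ne_zero.2 ha
  calc q * |a|⁻¹ * ((|a| * t ^ (a - 1)) • ((q * t ^ a)⁻¹ * F (q * t ^ a)))
      = q * q⁻¹ * |a|⁻¹ * (|a| * t ^ (a - 1) * (t ^ a)⁻¹) * F (q * t ^ a) := by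
        rw [smul_eq_mul, mul_inv]
        ring
    _ = t⁻¹ * F (q * t ^ a) := by
        rw [abs_mul_rpow_sub_one_mul_inv_rpow ht, mul_inv_cancel₀ hq.ne', one_mul,
          inv_mul_cancel_left₀ habs]

/-- A measurable family of functions `f p` on `(0, T]`, indexed by `p > 0`, with the size estimates
enjoyed by the Wright densities `t ↦ t⁻¹ W(-p t ^ (-α); -α, 0)` and inherited by their Laplace
convolutions: a bound in `L¹(0, T]` and a pointwise bound away from `t = 0`, both with explicit
dependence on `p`. -/
structure IsDensityFamily (T : ℝ) (f : ℝ → ℝ → ℝ) : Prop where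
  measurable_uncurry : Measurable (Function.uncurry f)
  integrableOn : ∀ p, 0 < p → IntegrableOn (f p) (Ioc 0 T)
  exists_integral_abs_le : ∃ C, 0 ≤ C ∧ ∀ p, 0 < p → ∫ t in Ioc 0 T, |f p t| ≤ C * min 1 p⁻¹
  exists_abs_le : ∀ ε, 0 < ε → ∃ C, 0 ≤ C ∧ ∀ p, 0 < p → ∀ t ∈ Icc ε T, |f p t| ≤ C * min p p⁻¹

namespace IsDensityFamily

variable {T : ℝ} {f g : ℝ → ℝ → ℝ}

theorem exists_integral_abs_le_const (hf : IsDensityFamily T f) :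
    ∃ C, 0 ≤ C ∧ ∀ p, 0 < p → ∀ t ≤ T, ∫ τ in Ioc 0 t, |f p τ| ≤ C := by
  obtain ⟨C, hC, h⟩ := hf.exists_integral_abs_le
  refine ⟨C, hC, fun p hp t ht => ?_⟩
  calc ∫ τ in Ioc 0 t, |f p τ| ≤ ∫ τ in Ioc 0 T, |f p τ| :=
        setIntegral_mono_set (hf.integrableOn p hp).abs (Eventually.of_forall fun _ => abs_nonneg _)
          (Ioc_subset_Ioc_right ht).eventuallyLE
    _ ≤ C * min 1 p⁻¹ := h p hp
    _ ≤ C := mul_le_of_le_one_right hC (min_le_left _ _)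

theorem exists_integral_abs_laplaceConv_le (hf : IsDensityFamily T f) (hg : IsDensityFamily T g) :
    ∃ C, 0 ≤ C ∧ ∀ p, 0 < p →
      ∫ t in Ioc 0 T, |laplaceConv (f p) (g p) t| ≤ C * min 1 p⁻¹ := by
  obtain ⟨A, hA, hfA⟩ := hf.exists_integral_abs_le
  obtain ⟨B, hB, hgB⟩ := hg.exists_integral_abs_le_const
  refine ⟨A * B, by positivity, fun p hp => ?_⟩
  calc ∫ t in Ioc 0 T, |laplaceConv (f p) (g p) t|
      ≤ (∫ t in Ioc 0 T, |f p t|) * ∫ t in Ioc 0 T, |g p t| :=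
        integral_abs_laplaceConv_le (hf.integrableOn p hp) (hg.integrableOn p hp)
    _ ≤ (A * min 1 p⁻¹) * B := by
        gcongr
        exacts [hfA p hp, hgB p hp T le_rfl]
    _ = A * B * min 1 p⁻¹ := mul_right_comm _ _ _

theorem exists_abs_laplaceConv_le (hf : IsDensityFamily T f) (hg : IsDensityFamily T g) {ε : ℝ}
    (hε : 0 < ε) :
    ∃ C, 0 ≤ C ∧ ∀ p, 0 < p → ∀ t ∈ Icc ε T,
      |laplaceConv (f p) (g p) t| ≤ C * min p p⁻¹ := by
  obtain ⟨A, hA, hfA⟩ := hf.exists_abs_le (ε / 2) (half_pos hε)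
  obtain ⟨B, hB, hgB⟩ := hg.exists_abs_le (ε / 2) (half_pos hε)
  obtain ⟨A', hA', hfA'⟩ := hf.exists_integral_abs_le_const
  obtain ⟨B', hB', hgB'⟩ := hg.exists_integral_abs_le_const
  refine ⟨A * B' + B * A', by positivity, fun p hp t ht => ?_⟩
  have ht0 : 0 < t := hε.trans_le ht.1
  have hsub : Ioc 0 t ⊆ Ioc 0 T := Ioc_subset_Ioc_right ht.2
  have hmem : ∀ τ ∈ Icc (t / 2) t, τ ∈ Icc (ε / 2) T := fun τ hτ =>
    ⟨by linarith [hτ.1, ht.1], hτ.2.trans ht.2⟩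
  calc |laplaceConv (f p) (g p) t|
      ≤ A * min p p⁻¹ * (∫ τ in Ioc 0 t, |g p τ|) + B * min p p⁻¹ * ∫ τ in Ioc 0 t, |f p τ| :=
        abs_laplaceConv_le_of_abs_le ht0.le ((hf.integrableOn p hp).mono_set hsub)
          ((hg.integrableOn p hp).mono_set hsub) (fun τ hτ => hfA p hp τ (hmem τ hτ))
          fun τ hτ => hgB p hp τ (hmem τ hτ)
    _ ≤ A * min p p⁻¹ * B' + B * min p p⁻¹ * A' := by
        gcongr
        exacts [hgB' p hp t ht.2, hfA' p hp t ht.2]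
    _ = (A * B' + B * A') * min p p⁻¹ := by ring

protected theorem laplaceConv (hf : IsDensityFamily T f) (hg : IsDensityFamily T g) :
    IsDensityFamily T fun p => laplaceConv (f p) (g p) where
  measurable_uncurry := measurable_laplaceConv hf.measurable_uncurry hg.measurable_uncurry
  integrableOn p hp := integrableOn_Ioc_laplaceConv (hf.integrableOn p hp) (hg.integrableOn p hp)
  exists_integral_abs_le := hf.exists_integral_abs_laplaceConv_le hg
  exists_abs_le _ := hf.exists_abs_laplaceConv_le hg

protected theorem iterConv {n : ℕ} {h : Fin (n + 1) → ℝ → ℝ → ℝ}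
    (hh : ∀ j, IsDensityFamily T (h j)) : IsDensityFamily T fun p => iterConv n fun j => h j p := by
  induction n with
  | zero => exact hh 0
  | succ n ih => exact (ih fun j => hh j.castSucc).laplaceConv (hh _)

end IsDensityFamily

theorem integrableOn_inv_mul_min_inv :
    IntegrableOn (fun z : ℝ => z⁻¹ * min z z⁻¹) (Ioi 0) := by
  simpa only [rpow_neg_one, rpow_one] using
    integrableOn_rpow_mul_min_rpow_inv (b := -1) (c := 1) (by norm_num) (by norm_num)

theorem exists_abs_inv_mul_wrightW_le {α : ℝ} (hα : α ∈ Ioo (0 : ℝ) 1) :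
    ∃ C, 0 ≤ C ∧ ∀ q, 0 < q → ∀ t, 0 < t → |t⁻¹ * wrightW α 0 (-q * t ^ (-α))| ≤
      C * (t⁻¹ * min (q * t ^ (-α)) (q * t ^ (-α))⁻¹) := by
  obtain ⟨C, hC, hW⟩ := exists_abs_wrightW_neg_le_min hα
  refine ⟨C, hC, fun q hq t ht => ?_⟩
  rw [abs_mul, abs_of_pos (inv_pos.2 ht), neg_mul, mul_left_comm C]
  gcongr
  exact hW _ (by positivity)

theorem measurable_inv_mul_wrightW {α : ℝ} (hα : α ∈ Ioo (0 : ℝ) 1) :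
    Measurable (Function.uncurry fun q t : ℝ => t⁻¹ * wrightW α 0 (-q * t ^ (-α))) :=
  measurable_snd.inv.mul ((measurable_wrightW_zero hα).comp
    (f := fun z : ℝ × ℝ => -z.1 * z.2 ^ (-α)) (by fun_prop))

theorem integrableOn_inv_mul_min_mul_rpow {α q : ℝ} (hα : α ≠ 0) (hq : 0 < q) :
    IntegrableOn (fun t : ℝ => t⁻¹ * min (q * t ^ (-α)) (q * t ^ (-α))⁻¹) (Ioi 0) :=
  integrableOn_inv_mul_comp_mul_rpow (F := fun z => min z z⁻¹) (neg_ne_zero.2 hα) hq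
    integrableOn_inv_mul_min_inv

theorem exists_setIntegral_inv_mul_min_mul_rpow_le {α T : ℝ} (hα : 0 < α) (hT : 0 ≤ T) :
    ∃ C, 0 ≤ C ∧ ∀ q, 0 < q →
      ∫ t in Ioc 0 T, t⁻¹ * min (q * t ^ (-α)) (q * t ^ (-α))⁻¹ ≤ C * min 1 q⁻¹ := by
  set I := ∫ z in Ioi (0 : ℝ), z⁻¹ * min z z⁻¹
  have hI : 0 ≤ I := setIntegral_nonneg measurableSet_Ioi fun z (hz : 0 < z) => by positivity
  refine ⟨α⁻¹ * I + T ^ α / α, by positivity, fun q hq => ?_⟩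
  have hint := integrableOn_inv_mul_min_mul_rpow hα.ne' hq
  rw [mul_min_of_nonneg _ _ (by positivity), mul_one]
  refine le_min (le_add_of_le_of_nonneg ?_ (by positivity)) ?_
  · calc ∫ t in Ioc 0 T, t⁻¹ * min (q * t ^ (-α)) (q * t ^ (-α))⁻¹
        ≤ ∫ t in Ioi 0, t⁻¹ * min (q * t ^ (-α)) (q * t ^ (-α))⁻¹ := by
          refine setIntegral_mono_set hint ?_ Ioc_subset_Ioi_self.eventuallyLE
          filter_upwards [ae_restrict_mem measurableSet_Ioi] with t (ht : 0 < t)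
          exact (by positivity : 0 ≤ t⁻¹ * min (q * t ^ (-α)) (q * t ^ (-α))⁻¹)
      _ = α⁻¹ * I := by
          rw [integral_inv_mul_comp_mul_rpow (fun z => min z z⁻¹) (neg_ne_zero.2 hα.ne') hq,
            abs_neg, abs_of_pos hα]
  · have hpow : IntervalIntegrable (fun t : ℝ => t ^ (α - 1)) volume 0 T :=
      intervalIntegrable_rpow' (by linarith)
    calc ∫ t in Ioc 0 T, t⁻¹ * min (q * t ^ (-α)) (q * t ^ (-α))⁻¹
        ≤ ∫ t in Ioc 0 T, q⁻¹ * t ^ (α - 1) := by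
          refine setIntegral_mono_on (hint.mono_set Ioc_subset_Ioi_self) (hpow.1.const_mul _)
            measurableSet_Ioc fun t ht => ?_
          have ht : 0 < t := ht.1
          calc t⁻¹ * min (q * t ^ (-α)) (q * t ^ (-α))⁻¹ ≤ t⁻¹ * (q * t ^ (-α))⁻¹ := by
                gcongr
                exact min_le_right _ _
            _ = q⁻¹ * t ^ (α - 1) := by
                rw [mul_inv, rpow_neg ht.le, inv_inv, rpow_sub_one ht.ne']
                ring
      _ = T ^ α / α * q⁻¹ := by
          rw [MeasureTheory.integral_const_mul, ← intervalIntegral.integral_of_le hT,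
            integral_rpow (Or.inl (by linarith)), sub_add_cancel, zero_rpow hα.ne', sub_zero,
            mul_comm]
    gcongr
    exact le_add_of_nonneg_left (by positivity)

theorem exists_inv_mul_min_mul_rpow_le {α ε : ℝ} (T : ℝ) (hα : 0 ≤ α) (hε : 0 < ε) :
    ∃ C, 0 ≤ C ∧ ∀ q, 0 < q → ∀ t ∈ Icc ε T,
      t⁻¹ * min (q * t ^ (-α)) (q * t ^ (-α))⁻¹ ≤ C * min q q⁻¹ := by
  rcases lt_or_ge T ε with hT | hT
  · exact ⟨0, le_rfl, fun q _ t ht => absurd (ht.1.trans ht.2) hT.not_ge⟩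
  have := hε.trans_le hT
  refine ⟨ε⁻¹ * max (ε ^ (-α)) (T ^ α), by positivity, fun q hq t ht => ?_⟩
  have ht0 : 0 < t := hε.trans_le ht.1
  rw [mul_assoc]
  gcongr
  · exact ht.1
  rw [mul_min_of_nonneg _ _ (by positivity)]
  refine min_le_min ?_ ?_
  · rw [mul_comm]
    gcongr
    exact (rpow_le_rpow_of_nonpos hε ht.1 (neg_nonpos.2 hα)).trans (le_max_left _ _)
  · rw [mul_inv, rpow_neg ht0.le, inv_inv, mul_comm]
    gcongr
    exact (rpow_le_rpow ht0.le ht.2 hα).trans (le_max_right _ _)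

theorem isDensityFamily_inv_mul_wrightW {T α : ℝ} (hT : 0 ≤ T) (hα : α ∈ Ioo (0 : ℝ) 1) :
    IsDensityFamily T fun p t => t⁻¹ * wrightW α 0 (-p * t ^ (-α)) := by
  obtain ⟨C, hC, hW⟩ := exists_abs_inv_mul_wrightW_le hα
  have hdom : ∀ p, 0 < p → IntegrableOn
      (fun t => C * (t⁻¹ * min (p * t ^ (-α)) (p * t ^ (-α))⁻¹)) (Ioc 0 T) := fun p hp =>
    ((integrableOn_inv_mul_min_mul_rpow hα.1.ne' hp).mono_set Ioc_subset_Ioi_self).const_mul C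
  have hint : ∀ p, 0 < p →
      IntegrableOn (fun t => t⁻¹ * wrightW α 0 (-p * t ^ (-α))) (Ioc 0 T) := by
    refine fun p hp => (hdom p hp).mono'
      (measurable_inv_mul_wrightW hα).of_uncurry_left.aestronglyMeasurable ?_
    filter_upwards [ae_restrict_mem measurableSet_Ioc] with t ht using hW p hp t ht.1
  refine ⟨measurable_inv_mul_wrightW hα, hint, ?_, fun ε hε => ?_⟩
  · obtain ⟨A, hA, hI⟩ := exists_setIntegral_inv_mul_min_mul_rpow_le hα.1 hT
    refine ⟨C * A, by positivity, fun p hp => ?_⟩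
    calc ∫ t in Ioc 0 T, |t⁻¹ * wrightW α 0 (-p * t ^ (-α))|
        ≤ ∫ t in Ioc 0 T, C * (t⁻¹ * min (p * t ^ (-α)) (p * t ^ (-α))⁻¹) :=
          setIntegral_mono_on (hint p hp).abs (hdom p hp) measurableSet_Ioc
            fun t ht => hW p hp t ht.1
      _ ≤ C * A * min 1 p⁻¹ := by
          rw [MeasureTheory.integral_const_mul, mul_assoc]
          exact mul_le_mul_of_nonneg_left (hI p hp) hC
  · obtain ⟨A, hA, hI⟩ := exists_inv_mul_min_mul_rpow_le T hα.1.le hε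
    refine ⟨C * A, by positivity, fun p hp t ht => (hW p hp t (hε.trans_le ht.1)).trans ?_⟩
    rw [mul_assoc]
    exact mul_le_mul_of_nonneg_left (hI p hp t ht) hC

theorem min_mul_mul_le {a b u v : ℝ} (ha : 0 ≤ a) (hu : 0 ≤ u) (hv : 0 ≤ v) :
    min (a * u) (b * v) ≤ max a b * min u v := by
  rw [mul_min_of_nonneg _ _ (ha.trans (le_max_left a b))]
  gcongr
  exacts [le_max_left _ _, le_max_right _ _]

theorem IsDensityFamily.comp_mul_left {T l : ℝ} {f : ℝ → ℝ → ℝ} (hf : IsDensityFamily T f)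
    (hl : 0 < l) : IsDensityFamily T fun p => f (l * p) where
  measurable_uncurry := hf.measurable_uncurry.comp (f := fun z : ℝ × ℝ => (l * z.1, z.2))
    (by fun_prop)
  integrableOn p hp := hf.integrableOn (l * p) (by positivity)
  exists_integral_abs_le := by
    obtain ⟨C, hC, h⟩ := hf.exists_integral_abs_le
    refine ⟨C * max 1 l⁻¹, by positivity, fun p hp => (h (l * p) (by positivity)).trans ?_⟩
    rw [mul_inv, mul_assoc]
    gcongr
    simpa only [one_mul] using
      min_mul_mul_le (b := l⁻¹) zero_le_one zero_le_one (inv_nonneg.2 hp.le)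
  exists_abs_le ε hε := by
    obtain ⟨C, hC, h⟩ := hf.exists_abs_le ε hε
    refine ⟨C * max l l⁻¹, by positivity, fun p hp t ht =>
      (h (l * p) (by positivity) t ht).trans ?_⟩
    rw [mul_inv, mul_assoc]
    gcongr
    exact min_mul_mul_le hl.le hp.le (inv_nonneg.2 hp.le)

theorem isDensityFamily_Sconv {T : ℝ} (hT : 0 ≤ T) {m : ℕ} {α lam : Fin (m + 1) → ℝ}
    (hα : ∀ j, α j ∈ Ioo (0 : ℝ) 1) (hlam : ∀ j, 0 < lam j) :
    IsDensityFamily T fun p => Sconv m 0 α fun j => lam j * p := by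
  have h := IsDensityFamily.iterConv fun j =>
    (isDensityFamily_inv_mul_wrightW hT (hα j)).comp_mul_left (hlam j)
  simpa only [Sconv, ite_self, zero_sub, rpow_neg_one] using h

/-- The absolute moment of order `a` of a density `g` on `(0, ∞)`. Only negative orders matter
here: those of order `-1/2` and `-1` control a Gaussian mixture and its derivative. -/
noncomputable def absMoment (a : ℝ) (g : ℝ → ℝ) : ℝ :=
  ∫ p in Ioi (0 : ℝ), p ^ a * |g p|

theorem absMoment_nonneg (a : ℝ) (g : ℝ → ℝ) : 0 ≤ absMoment a g :=
  setIntegral_nonneg measurableSet_Ioi fun p (hp : 0 < p) => by positivity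

namespace IsDensityFamily

variable {T a : ℝ} {f : ℝ → ℝ → ℝ}

theorem integrableOn_rpow_mul_abs (hf : IsDensityFamily T f) (ha : a ∈ Ioo (-2) 0) {t : ℝ}
    (ht : t ∈ Ioc 0 T) : IntegrableOn (fun p => p ^ a * |f p t|) (Ioi 0) := by
  obtain ⟨C, -, h⟩ := hf.exists_abs_le t ht.1
  have hm : Measurable fun p => f p t := hf.measurable_uncurry.of_uncurry_right
  refine ((integrableOn_rpow_mul_min_rpow_inv (c := 1) ha.2 (by linarith [ha.1])).const_mul C).mono'
    (by fun_prop) ?_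
  filter_upwards [ae_restrict_mem measurableSet_Ioi] with p (hp : 0 < p)
  rw [norm_of_nonneg (by positivity), rpow_one, mul_left_comm]
  gcongr
  exact h p hp t ⟨le_rfl, ht.2⟩

theorem exists_absMoment_le (hf : IsDensityFamily T f) (ha : a ∈ Ioo (-2) 0) {ε : ℝ}
    (hε : 0 < ε) :
    ∃ C, ∀ t ∈ Icc ε T, absMoment a (fun p => f p t) ≤ C := by
  obtain ⟨C, -, h⟩ := hf.exists_abs_le ε hε
  have hint := (integrableOn_rpow_mul_min_rpow_inv (c := 1) ha.2 (by linarith [ha.1])).const_mul C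
  refine ⟨∫ p in Ioi (0 : ℝ), C * (p ^ a * min (p ^ (1 : ℝ)) p⁻¹), fun t ht => ?_⟩
  refine setIntegral_mono_on (hf.integrableOn_rpow_mul_abs ha ⟨hε.trans_le ht.1, ht.2⟩) hint
    measurableSet_Ioi fun p (hp : 0 < p) => ?_
  rw [rpow_one, mul_left_comm]
  gcongr
  exact h p hp t ht

theorem integrable_prod_rpow_mul_abs (hf : IsDensityFamily T f) (ha : a ∈ Ioo (-1) 0) :
    Integrable (fun z : ℝ × ℝ => z.2 ^ a * |f z.2 z.1|)
      ((volume.restrict (Ioc 0 T)).prod (volume.restrict (Ioi 0))) := by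
  obtain ⟨C, -, h⟩ := hf.exists_integral_abs_le
  have hm : Measurable fun z : ℝ × ℝ => z.2 ^ a * |f z.2 z.1| :=
    (measurable_snd.pow_const a).mul (hf.measurable_uncurry.comp measurable_swap).abs
  rw [integrable_prod_iff' hm.aestronglyMeasurable]
  constructor
  · filter_upwards [ae_restrict_mem measurableSet_Ioi] with p (hp : 0 < p)
    exact (hf.integrableOn p hp).abs.const_mul _
  · refine ((integrableOn_rpow_mul_min_rpow_inv (c := 0) ha.2
      (by linarith [ha.1])).const_mul C).mono'
      (hm.norm.comp measurable_swap).stronglyMeasurable.integral_prod_right'.aestronglyMeasurable ?_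
    filter_upwards [ae_restrict_mem measurableSet_Ioi] with p (hp : 0 < p)
    have hpa : 0 ≤ p ^ a := rpow_nonneg hp.le a
    simp only [norm_mul, norm_of_nonneg hpa, norm_eq_abs, abs_abs]
    rw [MeasureTheory.integral_const_mul, abs_of_nonneg (by positivity), rpow_zero, mul_left_comm]
    exact mul_le_mul_of_nonneg_left (h p hp) hpa

theorem integrableOn_absMoment (hf : IsDensityFamily T f) (ha : a ∈ Ioo (-1) 0) :
    IntegrableOn (fun t => absMoment a fun p => f p t) (Ioc 0 T) :=
  (hf.integrable_prod_rpow_mul_abs ha).integral_prod_left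

end IsDensityFamily

/-! ### Gaussian mixtures -/

/-- The heat kernel at time `p` without the factor `(4π)^(-1/2)`. -/
noncomputable def gaussKernel (x p : ℝ) : ℝ :=
  p ^ (-(1 / 2 : ℝ)) * rexp (-(|x| ^ 2) / (4 * p))

/-- The spatial derivative of `gaussKernel`. -/
noncomputable def gaussKernelDeriv (x p : ℝ) : ℝ :=
  -(x / (2 * p)) * gaussKernel x p

theorem hasDerivAt_gaussKernel (x p : ℝ) :
    HasDerivAt (fun y => gaussKernel y p) (gaussKernelDeriv x p) x := by
  have h := (((hasDerivAt_pow 2 x).neg.div_const (4 * p)).exp).const_mul (p ^ (-(1 / 2 : ℝ)))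
  simp only [gaussKernel, gaussKernelDeriv, sq_abs]
  refine h.congr_deriv ?_
  rw [Pi.neg_apply]
  push_cast
  ring

theorem measurable_uncurry_gaussKernel : Measurable (Function.uncurry gaussKernel) := by
  unfold gaussKernel Function.uncurry
  fun_prop

theorem measurable_gaussKernelDeriv (x : ℝ) : Measurable (gaussKernelDeriv x) :=
  (by fun_prop : Measurable fun p : ℝ => -(x / (2 * p))).mul
    measurable_uncurry_gaussKernel.of_uncurry_left

theorem gaussKernel_nonneg (x : ℝ) {p : ℝ} (hp : 0 ≤ p) : 0 ≤ gaussKernel x p :=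
  mul_nonneg (rpow_nonneg hp _) (exp_pos _).le

theorem gaussKernel_le (x : ℝ) {p : ℝ} (hp : 0 ≤ p) : gaussKernel x p ≤ p ^ (-(1 / 2 : ℝ)) := by
  refine mul_le_of_le_one_right (rpow_nonneg hp _) (exp_le_one_iff.2 ?_)
  rw [neg_div]
  exact neg_nonpos.2 (by positivity)

theorem abs_gaussKernelDeriv (x : ℝ) {p : ℝ} (hp : 0 ≤ p) :
    |gaussKernelDeriv x p| = |x| / (2 * p) * gaussKernel x p := by
  rw [gaussKernelDeriv, abs_mul, abs_neg, abs_div, abs_of_nonneg (by positivity : 0 ≤ 2 * p),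
    abs_of_nonneg (gaussKernel_nonneg x hp)]

theorem mul_exp_neg_sq_le_one (u : ℝ) : u * rexp (-u ^ 2) ≤ 1 := by
  rw [Real.exp_neg, ← div_eq_mul_inv, div_le_one (exp_pos _)]
  nlinarith [add_one_le_exp (u ^ 2), sq_nonneg (u - 1)]

theorem abs_gaussKernelDeriv_le (x : ℝ) {p : ℝ} (hp : 0 < p) :
    |gaussKernelDeriv x p| ≤ p ^ (-1 : ℝ) := by
  have hexp : -(|x| ^ 2) / (4 * p) = -(|x| / (2 * √p)) ^ 2 := by
    rw [div_pow, mul_pow, sq_sqrt hp.le]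
    ring
  calc |gaussKernelDeriv x p|
      = p⁻¹ * (|x| / (2 * √p) * rexp (-(|x| / (2 * √p)) ^ 2)) := by
        rw [abs_gaussKernelDeriv x hp.le, gaussKernel, hexp, rpow_neg hp.le, ← sqrt_eq_rpow]
        field_simp
    _ ≤ p⁻¹ * 1 := by
        gcongr
        exact mul_exp_neg_sq_le_one _
    _ = p ^ (-1 : ℝ) := by rw [mul_one, rpow_neg_one]

theorem abs_mul_abs_gaussKernelDeriv_le (x : ℝ) {p : ℝ} (hp : 0 < p) :
    |x| * |gaussKernelDeriv x p| ≤ 2 * p ^ (-(1 / 2 : ℝ)) := by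
  rcases eq_or_ne x 0 with rfl | hx
  · rw [abs_zero, zero_mul]
    positivity
  have hv : 0 < |x| ^ 2 / (4 * p) := by positivity
  calc |x| * |gaussKernelDeriv x p|
      = 2 * p ^ (-(1 / 2 : ℝ)) * (|x| ^ 2 / (4 * p) * rexp (-(|x| ^ 2 / (4 * p)))) := by
        rw [abs_gaussKernelDeriv x hp.le, gaussKernel, neg_div]
        field_simp
        ring
    _ ≤ 2 * p ^ (-(1 / 2 : ℝ)) * (|x| ^ 2 / (4 * p) * (|x| ^ 2 / (4 * p))⁻¹) := by
        gcongr
        exact exp_neg_le_inv hv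
    _ = 2 * p ^ (-(1 / 2 : ℝ)) := by rw [mul_inv_cancel₀ hv.ne', mul_one]

/-- The superposition of the heat kernels at times `p > 0` with density `g`. Up to the factor
`(4π)^(-1/2)`, the kernel `E(·, t)` is the mixture with density `p ↦ S⁰_m(t; -λp; -α)`. -/
noncomputable def gaussMixture (g : ℝ → ℝ) (x : ℝ) : ℝ :=
  ∫ p in Ioi (0 : ℝ), gaussKernel x p * g p

theorem norm_gaussKernel_mul_le (g : ℝ → ℝ) (x : ℝ) {p : ℝ} (hp : 0 ≤ p) :
    ‖gaussKernel x p * g p‖ ≤ p ^ (-(1 / 2 : ℝ)) * |g p| := by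
  rw [norm_mul, norm_of_nonneg (gaussKernel_nonneg x hp), norm_eq_abs]
  gcongr
  exact gaussKernel_le x hp

section GaussMixture

variable {g : ℝ → ℝ}

theorem abs_gaussMixture_le (hg : IntegrableOn (fun p => p ^ (-(1 / 2 : ℝ)) * |g p|) (Ioi 0))
    (x : ℝ) : |gaussMixture g x| ≤ absMoment (-(1 / 2)) g := by
  rw [← norm_eq_abs]
  refine norm_integral_le_of_norm_le hg ?_
  filter_upwards [ae_restrict_mem measurableSet_Ioi] with p hp
  exact norm_gaussKernel_mul_le g x (le_of_lt hp)

theorem hasDerivAt_gaussMixture (hgm : AEStronglyMeasurable g (volume.restrict (Ioi 0)))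
    (hg : IntegrableOn (fun p => p ^ (-(1 / 2 : ℝ)) * |g p|) (Ioi 0))
    (hg' : IntegrableOn (fun p => p ^ (-1 : ℝ) * |g p|) (Ioi 0)) (x : ℝ) :
    HasDerivAt (gaussMixture g) (∫ p in Ioi (0 : ℝ), gaussKernelDeriv x p * g p) x := by
  have hmeas : ∀ y, AEStronglyMeasurable (fun p => gaussKernel y p * g p)
      (volume.restrict (Ioi 0)) := fun y =>
    measurable_uncurry_gaussKernel.of_uncurry_left.aestronglyMeasurable.mul hgm
  refine (_root_.hasDerivAt_integral_of_dominated_loc_of_deriv_le (μ := volume.restrict (Ioi 0))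
    (F := fun y p => gaussKernel y p * g p) (F' := fun y p => gaussKernelDeriv y p * g p)
    univ_mem (Eventually.of_forall hmeas) (hg.mono' (hmeas x) ?_)
    ((measurable_gaussKernelDeriv x).aestronglyMeasurable.mul hgm) ?_ hg' ?_).2
  · filter_upwards [ae_restrict_mem measurableSet_Ioi] with p hp
    exact norm_gaussKernel_mul_le g x (le_of_lt hp)
  · filter_upwards [ae_restrict_mem measurableSet_Ioi] with p hp y _
    rw [norm_mul, norm_eq_abs, norm_eq_abs]
    gcongr
    exact abs_gaussKernelDeriv_le y hp
  · exact Eventually.of_forall fun p y _ => (hasDerivAt_gaussKernel y p).mul_const _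

theorem abs_deriv_gaussMixture_le (hgm : AEStronglyMeasurable g (volume.restrict (Ioi 0)))
    (hg : IntegrableOn (fun p => p ^ (-(1 / 2 : ℝ)) * |g p|) (Ioi 0))
    (hg' : IntegrableOn (fun p => p ^ (-1 : ℝ) * |g p|) (Ioi 0)) (x : ℝ) :
    |deriv (gaussMixture g) x| ≤ absMoment (-1) g := by
  rw [(hasDerivAt_gaussMixture hgm hg hg' x).deriv, ← norm_eq_abs]
  refine norm_integral_le_of_norm_le hg' ?_
  filter_upwards [ae_restrict_mem measurableSet_Ioi] with p hp
  rw [norm_mul, norm_eq_abs, norm_eq_abs]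
  gcongr
  exact abs_gaussKernelDeriv_le x hp

theorem abs_mul_abs_deriv_gaussMixture_le
    (hgm : AEStronglyMeasurable g (volume.restrict (Ioi 0)))
    (hg : IntegrableOn (fun p => p ^ (-(1 / 2 : ℝ)) * |g p|) (Ioi 0))
    (hg' : IntegrableOn (fun p => p ^ (-1 : ℝ) * |g p|) (Ioi 0)) (x : ℝ) :
    |x| * |deriv (gaussMixture g) x| ≤ 2 * absMoment (-(1 / 2)) g := by
  rw [(hasDerivAt_gaussMixture hgm hg hg' x).deriv, ← abs_mul, ← norm_eq_abs, absMoment,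
    ← MeasureTheory.integral_const_mul, ← MeasureTheory.integral_const_mul]
  refine norm_integral_le_of_norm_le (hg.const_mul 2) ?_
  filter_upwards [ae_restrict_mem measurableSet_Ioi] with p hp
  rw [norm_mul, norm_mul, norm_eq_abs, norm_eq_abs, norm_eq_abs, ← mul_assoc, ← mul_assoc]
  exact mul_le_mul_of_nonneg_right (abs_mul_abs_gaussKernelDeriv_le x hp) (abs_nonneg _)

end GaussMixture

theorem measurable_uncurry_gaussMixture {f : ℝ → ℝ → ℝ} (hf : Measurable (Function.uncurry f)) :
    Measurable (Function.uncurry fun x t => gaussMixture (fun p => f p t) x) := by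
  have h : Measurable fun z : (ℝ × ℝ) × ℝ => gaussKernel z.1.1 z.2 * f z.2 z.1.2 :=
    (measurable_uncurry_gaussKernel.comp (f := fun z : (ℝ × ℝ) × ℝ => (z.1.1, z.2))
      (by fun_prop)).mul (hf.comp (f := fun z : (ℝ × ℝ) × ℝ => (z.2, z.1.2)) (by fun_prop))
  exact (h.stronglyMeasurable.integral_prod_right' (ν := volume.restrict (Ioi 0))).measurable

/-! ### Potentials along a curve -/

theorem intervalIntegrable_mul_of_isBigO_one {f g : ℝ → ℝ} {a b : ℝ} (hab : a < b)
    (hf : IntervalIntegrable f volume a b) (hg : IntervalIntegrable g volume a b)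
    (hfb : f =O[𝓝[<] b] fun _ => (1 : ℝ)) (hgb : ∀ c < b, ∃ C, ∀ τ ∈ Ioc a c, |g τ| ≤ C) :
    IntervalIntegrable (fun τ => f τ * g τ) volume a b := by
  obtain ⟨M, hM⟩ := ((Asymptotics.isBigO_one_iff ℝ).1 hfb).eventually_le
  obtain ⟨c, hc, hfM⟩ := (mem_nhdsLT_iff_exists_mem_Ico_Ioo_subset hab).1 hM
  obtain ⟨C, hgC⟩ := hgb c hc.2
  rw [intervalIntegrable_iff_integrableOn_Ioc_of_le hab.le] at hf hg ⊢
  rw [← Ioc_union_Ioc_eq_Ioc hc.1 hc.2.le]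
  refine IntegrableOn.union ?_ ?_
  · have hsub : Ioc a c ⊆ Ioc a b := Ioc_subset_Ioc_right hc.2.le
    refine (hf.mono_set hsub).mul_bdd (c := C) (hg.mono_set hsub).aestronglyMeasurable ?_
    filter_upwards [ae_restrict_mem measurableSet_Ioc] with τ hτ using hgC τ hτ
  · have hsub : Ioc c b ⊆ Ioc a b := Ioc_subset_Ioc_left hc.1
    refine (hg.mono_set hsub).bdd_mul (c := M) (hf.mono_set hsub).aestronglyMeasurable ?_
    rw [← restrict_Ioo_eq_restrict_Ioc]
    filter_upwards [ae_restrict_mem measurableSet_Ioo] with τ hτ using hfM hτ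

theorem aestronglyMeasurable_of_hasDerivAt {X : Type*} [MeasurableSpace X] {μ : Measure X}
    {F : ℝ → X → ℝ} {F' : X → ℝ} {y : ℝ} (hF : ∀ z, AEStronglyMeasurable (F z) μ)
    (hF' : ∀ᵐ ω ∂μ, HasDerivAt (fun z => F z ω) (F' ω) y) : AEStronglyMeasurable F' μ := by
  refine aestronglyMeasurable_of_tendsto_ae (𝓝[≠] (0 : ℝ))
    (f := fun h ω => h⁻¹ • (F (y + h) ω - F y ω))
    (fun h => ((hF (y + h)).sub (hF y)).const_smul h⁻¹) ?_
  filter_upwards [hF'] with ω hω using hasDerivAt_iff_tendsto_slope_zero.1 hω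

theorem exists_forall_le_abs_sub_of_ne {s : ℝ → ℝ} {t x : ℝ} (hs : ContinuousWithinAt s (Iio t) t)
    (hx : x ≠ s t) :
    ∃ δ > 0, ∃ U ∈ 𝓝 x, ∃ c < t, ∀ y ∈ U, ∀ τ ∈ Ioo c t, δ ≤ |y - s τ| := by
  have hδ : 0 < |x - s t| := abs_pos.2 (sub_ne_zero.2 hx)
  have hlim : Tendsto (fun z : ℝ × ℝ => |z.1 - s z.2|) (𝓝 x ×ˢ 𝓝[<] t) (𝓝 |x - s t|) :=
    (tendsto_fst.sub (hs.tendsto.comp tendsto_snd)).abs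
  obtain ⟨U, hU, V, hV, h⟩ := mem_prod_iff.1 (hlim.eventually (le_mem_nhds (half_lt_self hδ)))
  obtain ⟨c, hc, hcV⟩ := mem_nhdsLT_iff_exists_Ioo_subset.1 hV
  exact ⟨|x - s t| / 2, half_pos hδ, U, hU, c, hc, fun y hy τ hτ => h (mk_mem_prod hy (hcV hτ))⟩

/-- `K x r` is a kernel for potentials `x ↦ ∫ τ in 0..t, φ τ * K (x - s τ) (t - τ)` along a curve
`s`: it may be singular at `(x, r) = (0, 0)`, where its spatial derivative is worse by a factor
`|x|⁻¹`, the integrable function `w` of `r` controlling the singularity. -/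
structure IsPotentialKernel (t : ℝ) (w : ℝ → ℝ) (K : ℝ → ℝ → ℝ) : Prop where
  measurable_uncurry : Measurable (Function.uncurry K)
  differentiable : ∀ r ∈ Ioo 0 t, Differentiable ℝ fun x => K x r
  intervalIntegrable_majorant : IntervalIntegrable w volume 0 t
  exists_abs_majorant_le : ∀ ε, 0 < ε → ∃ C, ∀ r ∈ Ico ε t, |w r| ≤ C
  abs_le : ∀ r ∈ Ioo 0 t, ∀ x, |K x r| ≤ w r
  abs_mul_abs_deriv_le : ∀ r ∈ Ioo 0 t, ∀ x, |x| * |deriv (fun y => K y r) x| ≤ w r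
  exists_abs_deriv_le : ∀ ε, 0 < ε → ∃ D, ∀ r ∈ Ico ε t, ∀ x, |deriv (fun y => K y r) x| ≤ D

namespace IsPotentialKernel

variable {t x : ℝ} {w φ s : ℝ → ℝ} {K : ℝ → ℝ → ℝ}

theorem const_mul (hK : IsPotentialKernel t w K) (c : ℝ) :
    IsPotentialKernel t (fun r => |c| * w r) fun x r => c * K x r where
  measurable_uncurry := hK.measurable_uncurry.const_mul c
  differentiable r hr := (hK.differentiable r hr).const_mul c
  intervalIntegrable_majorant := hK.intervalIntegrable_majorant.const_mul _
  exists_abs_majorant_le ε hε := by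
    obtain ⟨C, hC⟩ := hK.exists_abs_majorant_le ε hε
    refine ⟨|c| * C, fun r hr => ?_⟩
    rw [abs_mul, abs_abs]
    exact mul_le_mul_of_nonneg_left (hC r hr) (abs_nonneg c)
  abs_le r hr x := by
    rw [abs_mul]
    exact mul_le_mul_of_nonneg_left (hK.abs_le r hr x) (abs_nonneg c)
  abs_mul_abs_deriv_le r hr x := by
    rw [deriv_const_mul_field, abs_mul, mul_left_comm]
    exact mul_le_mul_of_nonneg_left (hK.abs_mul_abs_deriv_le r hr x) (abs_nonneg c)
  exists_abs_deriv_le ε hε := by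
    obtain ⟨D, hD⟩ := hK.exists_abs_deriv_le ε hε
    refine ⟨|c| * D, fun r hr x => ?_⟩
    rw [deriv_const_mul_field, abs_mul]
    exact mul_le_mul_of_nonneg_left (hD r hr x) (abs_nonneg c)

theorem majorant_nonneg (hK : IsPotentialKernel t w K) {r : ℝ} (hr : r ∈ Ioo 0 t) : 0 ≤ w r :=
  (abs_nonneg _).trans (hK.abs_le r hr 0)

theorem intervalIntegrable_mul_majorant (hK : IsPotentialKernel t w K) (ht : 0 < t)
    (hφ : IntervalIntegrable φ volume 0 t) (hφt : φ =O[𝓝[<] t] fun _ => (1 : ℝ)) :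
    IntervalIntegrable (fun τ => φ τ * w (t - τ)) volume 0 t := by
  have hw : IntervalIntegrable (fun τ => w (t - τ)) volume 0 t := by
    simpa only [sub_zero, sub_self] using (hK.intervalIntegrable_majorant.comp_sub_left t).symm
  refine intervalIntegrable_mul_of_isBigO_one ht hφ hw hφt fun c hc => ?_
  obtain ⟨C, hC⟩ := hK.exists_abs_majorant_le (t - c) (sub_pos.2 hc)
  exact ⟨C, fun τ hτ => hC _ ⟨sub_le_sub_left hτ.2 t, sub_lt_self t hτ.1⟩⟩

theorem aestronglyMeasurable_mul (hK : IsPotentialKernel t w K) {μ : Measure ℝ}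
    (hφ : AEStronglyMeasurable φ μ) (hs : AEMeasurable s μ) (y : ℝ) :
    AEStronglyMeasurable (fun τ => φ τ * K (y - s τ) (t - τ)) μ :=
  hφ.mul (hK.measurable_uncurry.comp_aemeasurable
    ((aemeasurable_const.sub hs).prodMk (by fun_prop))).aestronglyMeasurable

theorem hasDerivAt_mul_comp_sub (hK : IsPotentialKernel t w K) (y : ℝ) {τ : ℝ}
    (hτ : τ ∈ Ioo 0 t) :
    HasDerivAt (fun y => φ τ * K (y - s τ) (t - τ))
      (φ τ * deriv (fun z => K z (t - τ)) (y - s τ)) y :=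
  (((hK.differentiable (t - τ) ⟨sub_pos.2 hτ.2, sub_lt_self t hτ.1⟩
    (y - s τ)).hasDerivAt.comp_sub_const y (s τ)).const_mul _)

theorem exists_abs_deriv_comp_sub_le (hK : IsPotentialKernel t w K)
    (hs : ContinuousWithinAt s (Iio t) t) (hx : x ≠ s t) :
    ∃ D B, ∃ U ∈ 𝓝 x, ∀ τ ∈ Ioo 0 t, ∀ y ∈ U,
      |deriv (fun z => K z (t - τ)) (y - s τ)| ≤ D + B * w (t - τ) := by
  obtain ⟨δ, hδ, U, hU, c, hc, hfar⟩ := exists_forall_le_abs_sub_of_ne hs hx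
  obtain ⟨D, hD⟩ := hK.exists_abs_deriv_le (t - c) (sub_pos.2 hc)
  refine ⟨max D 0, δ⁻¹, U, hU, fun τ hτ y hy => ?_⟩
  have hr : t - τ ∈ Ioo 0 t := ⟨sub_pos.2 hτ.2, sub_lt_self t hτ.1⟩
  have hw := hK.majorant_nonneg hr
  rcases le_or_gt τ c with hτc | hτc
  · exact le_add_of_le_of_nonneg
      ((hD _ ⟨by linarith, hr.2⟩ _).trans (le_max_left _ _)) (by positivity)
  · refine le_add_of_nonneg_of_le (le_max_right _ _) ?_
    rw [le_inv_mul_iff₀ hδ]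
    calc δ * |deriv (fun z => K z (t - τ)) (y - s τ)|
        ≤ |y - s τ| * |deriv (fun z => K z (t - τ)) (y - s τ)| := by
          gcongr
          exact hfar y hy τ ⟨hτc, hτ.2⟩
      _ ≤ w (t - τ) := hK.abs_mul_abs_deriv_le _ hr _

theorem intervalIntegrable_mul_comp_sub (hK : IsPotentialKernel t w K) (ht : 0 < t)
    (hφ : IntervalIntegrable φ volume 0 t) (hφt : φ =O[𝓝[<] t] fun _ => (1 : ℝ))
    (hs : AEMeasurable s (volume.restrict (Ioc 0 t))) (y : ℝ) :
    IntervalIntegrable (fun τ => φ τ * K (y - s τ) (t - τ)) volume 0 t := by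
  refine (hK.intervalIntegrable_mul_majorant ht hφ hφt).mono_fun
    (hK.aestronglyMeasurable_mul hφ.def'.aestronglyMeasurable (by rwa [uIoc_of_le ht.le]) y) ?_
  rw [uIoc_of_le ht.le, ← restrict_Ioo_eq_restrict_Ioc]
  filter_upwards [ae_restrict_mem measurableSet_Ioo] with τ hτ
  rw [norm_mul, norm_mul]
  exact mul_le_mul_of_nonneg_left
    ((hK.abs_le _ ⟨sub_pos.2 hτ.2, sub_lt_self t hτ.1⟩ _).trans (le_abs_self _)) (norm_nonneg _)

theorem exists_norm_mul_deriv_comp_sub_le (hK : IsPotentialKernel t w K) (φ : ℝ → ℝ)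
    (hs : ContinuousWithinAt s (Iio t) t) (hx : x ≠ s t) :
    ∃ D B, ∃ U ∈ 𝓝 x, ∀ τ ∈ Ioo 0 t, ∀ y ∈ U,
      ‖φ τ * deriv (fun z => K z (t - τ)) (y - s τ)‖ ≤ D * |φ τ| + B * |φ τ * w (t - τ)| := by
  obtain ⟨D, B, U, hU, hbound⟩ := hK.exists_abs_deriv_comp_sub_le hs hx
  refine ⟨D, B, U, hU, fun τ hτ y hy => ?_⟩
  have hw := hK.majorant_nonneg (r := t - τ) ⟨sub_pos.2 hτ.2, sub_lt_self t hτ.1⟩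
  calc ‖φ τ * deriv (fun z => K z (t - τ)) (y - s τ)‖
      ≤ |φ τ| * (D + B * w (t - τ)) := by
        rw [norm_mul, norm_eq_abs, norm_eq_abs]
        gcongr
        exact hbound τ hτ y hy
    _ = D * |φ τ| + B * |φ τ * w (t - τ)| := by
        rw [abs_mul, abs_of_nonneg hw]
        ring

theorem hasDerivAt_integral (hK : IsPotentialKernel t w K) (ht : 0 < t)
    (hφ : IntervalIntegrable φ volume 0 t) (hφt : φ =O[𝓝[<] t] fun _ => (1 : ℝ))
    (hsm : AEMeasurable s (volume.restrict (Ioc 0 t))) (hs : ContinuousWithinAt s (Iio t) t)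
    (hx : x ≠ s t) :
    HasDerivAt (fun y => ∫ τ in (0 : ℝ)..t, φ τ * K (y - s τ) (t - τ))
      (∫ τ in (0 : ℝ)..t, φ τ * deriv (fun z => K z (t - τ)) (x - s τ)) x := by
  obtain ⟨D, B, U, hU, hbound⟩ := hK.exists_norm_mul_deriv_comp_sub_le φ hs hx
  have hIoo : ∀ᵐ τ : ℝ, τ ∈ uIoc 0 t → τ ∈ Ioo 0 t := by
    rw [uIoc_of_le ht.le]
    filter_upwards [Measure.ae_ne volume t] with τ hτt hτ
    exact ⟨hτ.1, hτ.2.lt_of_ne hτt⟩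
  have hint := hK.intervalIntegrable_mul_comp_sub ht hφ hφt hsm
  have hmeas := fun y => (hint y).def'.aestronglyMeasurable
  have hderiv := fun y τ (hτ : τ ∈ Ioo 0 t) => hK.hasDerivAt_mul_comp_sub (φ := φ) (s := s) y hτ
  refine (intervalIntegral.hasDerivAt_integral_of_dominated_loc_of_deriv_le
    (F' := fun y τ => φ τ * deriv (fun z => K z (t - τ)) (y - s τ))
    (bound := fun τ => D * |φ τ| + B * |φ τ * w (t - τ)|) hU (Eventually.of_forall hmeas) (hint x)
    (aestronglyMeasurable_of_hasDerivAt (y := x) hmeas ?_) ?_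
    ((hφ.abs.const_mul D).add ((hK.intervalIntegrable_mul_majorant ht hφ hφt).abs.const_mul B))
    ?_).2
  · exact ((ae_restrict_iff' measurableSet_uIoc).2 hIoo).mono (hderiv x)
  · exact hIoo.mono fun τ hτ hτt => hbound τ (hτ hτt)
  · exact hIoo.mono fun τ hτ hτt y _ => hderiv y τ (hτ hτt)

end IsPotentialKernel

theorem IsDensityFamily.isPotentialKernel_gaussMixture {t : ℝ} {f : ℝ → ℝ → ℝ}
    (hf : IsDensityFamily t f) (ht : 0 ≤ t) :
    IsPotentialKernel t (fun r => 2 * absMoment (-(1 / 2)) fun p => f p r)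
      fun x r => gaussMixture (fun p => f p r) x := by
  have hmeas : ∀ r, AEStronglyMeasurable (fun p => f p r) (volume.restrict (Ioi 0)) := fun r =>
    hf.measurable_uncurry.of_uncurry_right.aestronglyMeasurable
  have hhalf : ∀ r ∈ Ioo 0 t, IntegrableOn (fun p => p ^ (-(1 / 2 : ℝ)) * |f p r|) (Ioi 0) :=
    fun r hr => hf.integrableOn_rpow_mul_abs ⟨by norm_num, by norm_num⟩ (Ioo_subset_Ioc_self hr)
  have hone : ∀ r ∈ Ioo 0 t, IntegrableOn (fun p => p ^ (-1 : ℝ) * |f p r|) (Ioi 0) :=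
    fun r hr => hf.integrableOn_rpow_mul_abs ⟨by norm_num, by norm_num⟩ (Ioo_subset_Ioc_self hr)
  constructor
  · exact measurable_uncurry_gaussMixture hf.measurable_uncurry
  · exact fun r hr x =>
      (hasDerivAt_gaussMixture (hmeas r) (hhalf r hr) (hone r hr) x).differentiableAt
  · exact ((intervalIntegrable_iff_integrableOn_Ioc_of_le ht).2
      (hf.integrableOn_absMoment ⟨by norm_num, by norm_num⟩)).const_mul 2
  · intro ε hε
    obtain ⟨C, hC⟩ := hf.exists_absMoment_le (a := -(1 / 2)) ⟨by norm_num, by norm_num⟩ hε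
    refine ⟨2 * C, fun r hr => ?_⟩
    rw [abs_of_nonneg (mul_nonneg zero_le_two (absMoment_nonneg _ _))]
    exact mul_le_mul_of_nonneg_left (hC r (Ico_subset_Icc_self hr)) zero_le_two
  · intro r hr x
    have := absMoment_nonneg (-(1 / 2)) fun p => f p r
    exact (abs_gaussMixture_le (hhalf r hr) x).trans (by linarith)
  · exact fun r hr => abs_mul_abs_deriv_gaussMixture_le (hmeas r) (hhalf r hr) (hone r hr)
  · intro ε hε
    obtain ⟨C, hC⟩ := hf.exists_absMoment_le (a := -1) ⟨by norm_num, by norm_num⟩ hε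
    refine ⟨C, fun r hr x => ?_⟩
    have hr0 : r ∈ Ioo 0 t := ⟨hε.trans_le hr.1, hr.2⟩
    exact (abs_deriv_gaussMixture_le (hmeas r) (hhalf r hr0) (hone r hr0) x).trans
      (hC r (Ico_subset_Icc_self hr))

theorem exists_isPotentialKernel_kerE {m : ℕ} {α lam : Fin (m + 1) → ℝ} {t : ℝ} (ht : 0 ≤ t)
    (hα : ∀ j, α j ∈ Ioo (0 : ℝ) 1) (hlam : ∀ j, 0 < lam j) :
    ∃ w, IsPotentialKernel t w (kerE m α lam) :=
  ⟨_, ((isDensityFamily_Sconv ht hα hlam).isPotentialKernel_gaussMixture ht).const_mul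
    ((4 * π) ^ (-(1 / 2 : ℝ)))⟩

theorem continuousOn_of_abs_sub_le_rpow {s : ℝ → ℝ} {A : Set ℝ} {β : ℝ} (hβ : 0 < β)
    (hs : ∀ t ∈ A, ∀ τ ∈ A, |s t - s τ| ≤ |t - τ| ^ β) : ContinuousOn s A := by
  intro τ hτ
  rw [ContinuousWithinAt, tendsto_iff_norm_sub_tendsto_zero]
  have hlim : Tendsto (fun t => |t - τ| ^ β) (𝓝[A] τ) (𝓝 0) := by
    have hcont : Continuous fun t : ℝ => |t - τ| ^ β :=
      Continuous.rpow_const (by fun_prop) fun _ => Or.inr hβ.le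
    simpa [hβ.ne'] using (hcont.tendsto τ).mono_left nhdsWithin_le_nhds
  refine squeeze_zero' (Eventually.of_forall fun _ => norm_nonneg _) ?_ hlim
  filter_upwards [self_mem_nhdsWithin] with t ht using hs t ht τ hτ

section RpowMul

variable {φ ψ : ℝ → ℝ} {a T : ℝ}

theorem eqOn_rpow_mul_of_eq_rpow_mul (h : ∀ τ ∈ Ioc 0 T, ψ τ = τ ^ (1 - a) * φ τ) :
    EqOn φ (fun τ => τ ^ (a - 1) * ψ τ) (Ioc 0 T) := fun τ hτ => by
  simp only [h τ hτ]
  rw [← mul_assoc, ← rpow_add hτ.1, sub_add_sub_cancel, sub_self, rpow_zero, one_mul]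

theorem intervalIntegrable_of_eq_rpow_mul (ha : 0 < a) (hT : 0 ≤ T) (hψ : ContinuousOn ψ (Icc 0 T))
    (h : ∀ τ ∈ Ioc 0 T, ψ τ = τ ^ (1 - a) * φ τ) : IntervalIntegrable φ volume 0 T := by
  refine (intervalIntegrable_congr ?_).1 ((intervalIntegrable_rpow' (r := a - 1)
    (by linarith)).mul_continuousOn (by rwa [uIcc_of_le hT]))
  rw [uIoc_of_le hT]
  exact (eqOn_rpow_mul_of_eq_rpow_mul h).symm

theorem continuousOn_Ioc_of_eq_rpow_mul (hψ : ContinuousOn ψ (Icc 0 T))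
    (h : ∀ τ ∈ Ioc 0 T, ψ τ = τ ^ (1 - a) * φ τ) : ContinuousOn φ (Ioc 0 T) :=
  ((continuousOn_id.rpow_const fun _ hτ => Or.inl hτ.1.ne').mul
    (hψ.mono Ioc_subset_Icc_self)).congr (eqOn_rpow_mul_of_eq_rpow_mul h)

end RpowMul

theorem diff_under_integral_E_general {m : ℕ} {α lam : Fin (m + 1) → ℝ}
    (hα : ∀ j, α j ∈ Ioo (0 : ℝ) 1) (hlam : ∀ j, 0 < lam j) {φ s : ℝ → ℝ} {t : ℝ} (ht : 0 < t)
    (hφ : IntervalIntegrable φ volume 0 t) (hφt : φ =O[𝓝[<] t] fun _ => (1 : ℝ))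
    (hsm : AEMeasurable s (volume.restrict (Ioc 0 t))) (hst : ContinuousWithinAt s (Iio t) t)
    {x : ℝ} (hx : x ≠ s t) :
    HasDerivAt (fun y => ∫ τ in (0 : ℝ)..t, φ τ * kerE m α lam (y - s τ) (t - τ))
      (∫ τ in (0 : ℝ)..t, φ τ * kerEx m α lam (x - s τ) (t - τ)) x := by
  obtain ⟨w, hE⟩ := exists_isPotentialKernel_kerE ht.le hα hlam
  exact hE.hasDerivAt_integral ht hφ hφt hsm hst hx

/-- Differentiation under the integral sign for the `E`-potential. -/
theorem diff_under_integral_E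
    (m : ℕ) (α lam : Fin (m + 1) → ℝ)
    (hmono : StrictMono α) (hpos : ∀ j, 0 < α j) (hlt1 : ∀ j, α j < 1)
    (hlam : ∀ j, 0 < lam j)
    (T : ℝ) (hT : 0 < T) (φ s : ℝ → ℝ)
    (hφ : ∃ ψ : ℝ → ℝ, ContinuousOn ψ (Set.Icc 0 T) ∧
      ∀ t ∈ Set.Ioc (0:ℝ) T, ψ t = t ^ (1 - α (Fin.last m)) * φ t)
    (β : ℝ) (hβ : α (Fin.last m) / 2 < β)
    (hs : ∀ t ∈ Set.Icc (0:ℝ) T, ∀ τ ∈ Set.Icc (0:ℝ) T, |s t - s τ| ≤ |t - τ| ^ β)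
    (t : ℝ) (ht : t ∈ Set.Ioc (0:ℝ) T) (x : ℝ) (hx : x ≠ s t) :
    HasDerivAt (fun y => ∫ τ in (0:ℝ)..t, φ τ * kerE m α lam (y - s τ) (t - τ))
      (∫ τ in (0:ℝ)..t, φ τ * kerEx m α lam (x - s τ) (t - τ)) x := by
  obtain ⟨ψ, hψ, hψφ⟩ := hφ
  have ha : 0 < α (Fin.last m) := hpos _
  have hφi : IntervalIntegrable φ volume 0 t :=
    (intervalIntegrable_of_eq_rpow_mul ha ht.1.le (hψ.mono (Icc_subset_Icc_right ht.2))
      fun τ hτ => hψφ τ (Ioc_subset_Ioc_right ht.2 hτ))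
  have hφc : ContinuousOn φ (Ioc 0 T) := continuousOn_Ioc_of_eq_rpow_mul hψ hψφ
  have hφt : φ =O[𝓝[<] t] fun _ => (1 : ℝ) :=
    ((hφc t ht).tendsto.mono_left (nhdsWithin_le_of_mem
      (mem_of_superset (Ioo_mem_nhdsLT_of_mem ht) Ioo_subset_Ioc_self))).isBigO_one ℝ
  have hsc : ContinuousOn s (Icc 0 T) := continuousOn_of_abs_sub_le_rpow (by linarith) hs
  exact diff_under_integral_E_general (fun j => ⟨hpos j, hlt1 j⟩) hlam ht.1 hφi hφt
    ((hsc.mono fun τ hτ => ⟨hτ.1.le, hτ.2.trans ht.2⟩).aemeasurable measurableSet_Ioc)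
    ((hsc t (Ioc_subset_Icc_self ht)).mono_of_mem_nhdsWithin (Icc_mem_nhdsLT_of_mem ht)) hx
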